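/- Let ζ ∈ (−3, 0], κ ∈ [0,1], m ∈ ℕ, R̄ > 0, A > 0 and R > 0. Let ε = 2^{−N}, let ε̄ ∈ [ε, 1], and let ψ^{ε,ε̄} : ε²ℤ × εℤ → [0,∞) be supported in the ball of radius R̄ ε̄ centered at the origin and satisfy ε³ Σ_{w ∈ ε²ℤ × εℤ} ψ^{ε,ε̄}(w) = 1 and |D̄_ε^k ψ^{ε,ε̄}(z)| ≤ A ε̄^{−3−|k|_s} for all z and all k ∈ ℕ² with |k|_s ≤ m+2. Then for every K^ε : ε²ℤ × εℤ → ℝ supported in the ball of radius R around the origin, writing K^ε_{ε̄} := K^ε ∗_ε ψ^{ε,ε̄}, one has ⦀K^ε − K^ε_{ε̄}⦀_{ζ−κ; m}^{(ε)} ≤ C ε̄^{κ} ⦀K^ε⦀_{ζ; m+2}^{(ε)}, with a constant C depending only on m, ζ, κ, R̄, A and R but not on ε or ε̄. -/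

import Mathlib

open Real

noncomputable section

/-- Forward time difference `D̄_{t,ε²}` on grid functions (indexed form:
`f m j` is the value at the point `(ε² m, ε j)`). -/
def fdT (ε : ℝ) (f : ℤ → ℤ → ℝ) : ℤ → ℤ → ℝ :=
  fun m j => (f (m + 1) j - f m j) / ε ^ 2

/-- Forward space difference `D̄_{x,ε}` on grid functions. -/
def fdX (ε : ℝ) (f : ℤ → ℤ → ℝ) : ℤ → ℤ → ℝ :=
  fun m j => (f m (j + 1) - f m j) / ε

/-- Iterated forward differences `D̄_ε^k = D̄_{t,ε²}^{k₀} D̄_{x,ε}^{k₁}`. -/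
def fdiff (ε : ℝ) (k₀ k₁ : ℕ) (f : ℤ → ℤ → ℝ) : ℤ → ℤ → ℝ :=
  (fdT ε)^[k₀] ((fdX ε)^[k₁] f)

/-- Parabolic norm `‖z‖_s` of the grid point `z = (ε² m, ε j)`. -/
def snorm (ε : ℝ) (m j : ℤ) : ℝ :=
  max (Real.sqrt |ε ^ 2 * (m : ℝ)|) |ε * (j : ℝ)|

/-- `‖z‖_{s,ε} = ‖z‖_s ∨ ε` for the grid point `z = (ε² m, ε j)`. -/
def snormE (ε : ℝ) (m j : ℤ) : ℝ := max (snorm ε m j) ε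

/-- The grid function `K` is supported in the parabolic ball of radius `R`
around the origin. -/
def SuppIn (ε R : ℝ) (K : ℤ → ℤ → ℝ) : Prop :=
  ∀ m j : ℤ, R < snorm ε m j → K m j = 0

/-- `⦀K⦀_{ζ;m}^{(ε)} ≤ M`, expressed through the defining bounds. -/
def SingBound (ε ζ : ℝ) (m : ℕ) (M : ℝ) (K : ℤ → ℤ → ℝ) : Prop :=
  ∀ k₀ k₁ : ℕ, 2 * k₀ + k₁ ≤ m → ∀ mz j : ℤ,
    |fdiff ε k₀ k₁ K mz j| ≤ M * snormE ε mz j ^ (ζ - (2 * (k₀ : ℝ) + (k₁ : ℝ)))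

/-- The discrete space-time convolution `(K ∗_ε ψ)(z) = ε³ Σ_w K(z-w) ψ(w)`
on grid indices. -/
def dconv (ε : ℝ) (K ψ : ℤ → ℤ → ℝ) : ℤ → ℤ → ℝ :=
  fun m j => ε ^ 3 * ∑' p : ℤ × ℤ, K (m - p.1) (j - p.2) * ψ p.1 p.2

lemma sqrt_add_le_aux (x y : ℝ) (hx : 0 ≤ x) (hy : 0 ≤ y) :
    Real.sqrt (x + y) ≤ Real.sqrt x + Real.sqrt y := by
  rw [Real.sqrt_le_left (by positivity)]
  nlinarith [Real.sq_sqrt hx, Real.sq_sqrt hy, Real.sqrt_nonneg x, Real.sqrt_nonneg y,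
    mul_nonneg (Real.sqrt_nonneg x) (Real.sqrt_nonneg y)]

open Finset in
lemma sum1d (s : ℝ) (hs0 : 0 ≤ s) (hs1 : s < 1) (n : ℕ) :
    ∑ j ∈ Finset.Icc (-(n:ℤ)) n, (max |(j:ℝ)| 1) ^ (-s) ≤ 1 + 2 / (1 - s) * (n:ℝ) ^ (1 - s) := by
  have h1s : 0 < 1 - s := by linarith
  induction n with
  | zero => simp [Real.zero_rpow h1s.ne']
  | succ n ih =>
    have hset : Finset.Icc (-((n+1:ℕ):ℤ)) ((n+1:ℕ):ℤ)
        = insert ((n:ℤ)+1) (insert (-((n:ℤ)+1)) (Finset.Icc (-(n:ℤ)) n)) := by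
      ext x; simp only [Finset.mem_Icc, Finset.mem_insert]; push_cast; omega
    rw [hset, Finset.sum_insert, Finset.sum_insert]
    rotate_left
    · simp
    · simp only [Finset.mem_Icc, Finset.mem_insert]; omega
    have hn : (0:ℝ) ≤ n := Nat.cast_nonneg n
    have e1 : max |(((n:ℤ)+1 : ℤ):ℝ)| 1 = (n:ℝ)+1 := by
      push_cast; rw [abs_of_pos (by linarith)]; exact max_eq_left (by linarith)
    have e2 : max |((-((n:ℤ)+1) : ℤ):ℝ)| 1 = (n:ℝ)+1 := by
      push_cast; rw [abs_of_neg (by linarith), max_eq_left (by linarith)]; ring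
    rw [e1, e2]
    have hp : (0:ℝ) < n + 1 := by linarith
    have key : (n:ℝ)^(1-s) + (1-s) * ((n:ℝ)+1)^(-s) ≤ ((n:ℝ)+1)^(1-s) := by
      have hb := rpow_one_add_le_one_add_mul_self (s := -(1/((n:ℝ)+1))) (p := 1 - s)
        (by rw [neg_le_neg_iff, div_le_one hp]; linarith) (by linarith) (by linarith)
      have e3 : 1 + -(1/((n:ℝ)+1)) = n / (n+1) := by field_simp; ring
      rw [e3, Real.div_rpow hn hp.le] at hb
      have hpp : (0:ℝ) < ((n:ℝ)+1)^(1-s) := Real.rpow_pos_of_pos hp _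
      rw [div_le_iff₀ hpp] at hb
      have e4 : ((n:ℝ)+1)^(1-s) = ((n:ℝ)+1) * ((n:ℝ)+1)^(-s) := by
        rw [sub_eq_add_neg, Real.rpow_add hp, Real.rpow_one]
      have e5 : (1 + (1 - s) * -(1 / ((n:ℝ) + 1))) * ((n:ℝ)+1)^(1-s)
          = ((n:ℝ)+1)^(1-s) - (1-s) * ((n:ℝ)+1)^(-s) := by
        rw [e4]; field_simp; ring
      linarith
    have h2 : 2 * ((n:ℝ)+1)^(-s) ≤ 2 / (1-s) * (((n:ℝ)+1)^(1-s) - (n:ℝ)^(1-s)) := by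
      rw [div_mul_eq_mul_div, le_div_iff₀ h1s]; linarith
    push_cast
    linarith

lemma sum1d' (s : ℝ) (hs0 : 0 ≤ s) (hs1 : s < 1) (X : ℝ) (hX : 1 ≤ X) :
    ∑ j ∈ Finset.Icc (-(⌊X⌋₊:ℤ)) ⌊X⌋₊, (max |(j:ℝ)| 1) ^ (-s) ≤ (1 + 2 / (1 - s)) * X ^ (1 - s) := by
  have h1s : 0 < 1 - s := by linarith
  refine (sum1d s hs0 hs1 _).trans ?_
  have h1 : (1:ℝ) ≤ X ^ (1-s) := Real.one_le_rpow hX h1s.le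
  have h2 : ((⌊X⌋₊:ℕ):ℝ) ^ (1-s) ≤ X ^ (1-s) :=
    Real.rpow_le_rpow (Nat.cast_nonneg _) (Nat.floor_le (by linarith)) h1s.le
  have h3 : 0 ≤ 2 / (1-s) := by positivity
  nlinarith [mul_le_mul_of_nonneg_left h2 h3]

def nu (i j : ℤ) : ℝ := max (Real.sqrt |(i:ℝ)|) |(j:ℝ)|

lemma nu_nonneg (i j : ℤ) : 0 ≤ nu i j := le_max_of_le_left (Real.sqrt_nonneg _)

lemma snorm_eq (ε : ℝ) (hε : 0 < ε) (i j : ℤ) : snorm ε i j = ε * nu i j := by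
  unfold snorm nu
  rw [abs_mul, abs_mul, abs_of_pos hε, abs_of_pos (by positivity : 0 < ε^2),
    Real.sqrt_mul (by positivity), Real.sqrt_sq hε.le, mul_max_of_nonneg _ _ hε.le]

lemma snormE_eq (ε : ℝ) (hε : 0 < ε) (i j : ℤ) : snormE ε i j = ε * max (nu i j) 1 := by
  unfold snormE
  rw [snorm_eq ε hε, mul_max_of_nonneg _ _ hε.le, mul_one]

lemma nu_add (i j a b : ℤ) : nu (i + a) (j + b) ≤ nu i j + nu a b := by
  unfold nu
  apply max_le
  · calc Real.sqrt |((i + a : ℤ):ℝ)| ≤ Real.sqrt (|(i:ℝ)| + |(a:ℝ)|) := by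
          apply Real.sqrt_le_sqrt; push_cast; exact abs_add_le _ _
      _ ≤ Real.sqrt |(i:ℝ)| + Real.sqrt |(a:ℝ)| := sqrt_add_le_aux _ _ (abs_nonneg _) (abs_nonneg _)
      _ ≤ _ := add_le_add (le_max_left _ _) (le_max_left _ _)
  · push_cast
    exact (abs_add_le _ _).trans (add_le_add (le_max_right _ _) (le_max_right _ _))

lemma nu_mono {i j a b : ℤ} (h1 : |i| ≤ |a|) (h2 : |j| ≤ |b|) : nu i j ≤ nu a b := by
  unfold nu
  have h1' : |(i:ℝ)| ≤ |(a:ℝ)| := by exact_mod_cast h1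
  have h2' : |(j:ℝ)| ≤ |(b:ℝ)| := by exact_mod_cast h2
  exact max_le_max (Real.sqrt_le_sqrt h1') h2'

def box (X : ℝ) : Finset (ℤ × ℤ) :=
  Finset.Icc (-(⌊X^2⌋₊:ℤ)) ⌊X^2⌋₊ ×ˢ Finset.Icc (-(⌊X⌋₊:ℤ)) ⌊X⌋₊

lemma abs_le_floor (j : ℤ) (X : ℝ) (h : |(j:ℝ)| ≤ X) : j ∈ Finset.Icc (-(⌊X⌋₊:ℤ)) ⌊X⌋₊ := by
  rw [Finset.mem_Icc, ← abs_le]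
  have : j.natAbs ≤ ⌊X⌋₊ := Nat.le_floor (by rw [Nat.cast_natAbs]; exact_mod_cast h)
  rw [Int.abs_eq_natAbs]; omega

lemma mem_box (X : ℝ) (i j : ℤ) (h : nu i j ≤ X) : (i, j) ∈ box X := by
  unfold box
  have h1 : Real.sqrt |(i:ℝ)| ≤ X := (le_max_left _ _).trans h
  have h2 : |(j:ℝ)| ≤ X := (le_max_right _ _).trans h
  rw [Finset.mem_product]
  exact ⟨abs_le_floor _ _ ((Real.sqrt_le_left ((Real.sqrt_nonneg _).trans h1)).1 h1), abs_le_floor _ _ h2⟩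

lemma nu_rpow_le (ζ : ℝ) (h0 : ζ ≤ 0) (i j : ℤ) :
    (max (nu i j) 1) ^ ζ ≤ (max |(i:ℝ)| 1) ^ (-(-ζ/3)) * (max |(j:ℝ)| 1) ^ (-(-ζ/3)) := by
  set N := max (nu i j) 1
  have hN : 0 < N := lt_max_of_lt_right one_pos
  have hN1 : 1 ≤ N := le_max_right _ _
  have hi : max |(i:ℝ)| 1 ≤ N ^ (2:ℝ) := by
    rw [Real.rpow_two]
    apply max_le
    · have : Real.sqrt |(i:ℝ)| ≤ N := (le_max_left _ _).trans (le_max_left _ _)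
      exact (Real.sqrt_le_left hN.le).1 this
    · nlinarith
  have hj : max |(j:ℝ)| 1 ≤ N := max_le_max (le_max_right _ _) le_rfl
  have hi0 : 0 < max |(i:ℝ)| 1 := lt_max_of_lt_right one_pos
  have hj0 : 0 < max |(j:ℝ)| 1 := lt_max_of_lt_right one_pos
  have e : N ^ ζ = (N^(2:ℝ)) ^ (-(-ζ/3)) * N ^ (-(-ζ/3)) := by
    rw [← Real.rpow_mul hN.le, ← Real.rpow_add hN]; congr 1; ring
  rw [e]
  exact mul_le_mul (Real.rpow_le_rpow_of_nonpos hi0 hi (by linarith))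
    (Real.rpow_le_rpow_of_nonpos hj0 hj (by linarith)) (by positivity) (by positivity)

lemma sum2d (ζ : ℝ) (h3 : -3 < ζ) (h0 : ζ ≤ 0) (X : ℝ) (hX : 1 ≤ X) :
    ∑ p ∈ box X, (max (nu p.1 p.2) 1) ^ ζ ≤ (1 + 2 / (1 - -ζ/3))^2 * X ^ (3 + ζ) := by
  have hX0 : 0 < X := by linarith
  have hs0 : 0 ≤ -ζ/3 := by linarith
  have hs1 : -ζ/3 < 1 := by linarith
  calc _ ≤ ∑ p ∈ box X, (max |(p.1:ℝ)| 1) ^ (-(-ζ/3)) * (max |(p.2:ℝ)| 1) ^ (-(-ζ/3)) :=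
        Finset.sum_le_sum fun p _ => nu_rpow_le ζ h0 _ _
    _ = (∑ i ∈ Finset.Icc (-(⌊X^2⌋₊:ℤ)) ⌊X^2⌋₊, (max |(i:ℝ)| 1) ^ (-(-ζ/3))) *
        ∑ j ∈ Finset.Icc (-(⌊X⌋₊:ℤ)) ⌊X⌋₊, (max |(j:ℝ)| 1) ^ (-(-ζ/3)) := by
        rw [box, Finset.sum_product, Finset.sum_mul_sum]
    _ ≤ ((1 + 2 / (1 - -ζ/3)) * (X^2) ^ (1 - -ζ/3)) * ((1 + 2 / (1 - -ζ/3)) * X ^ (1 - -ζ/3)) := by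
        have h1s : 0 < 1 - -ζ/3 := by linarith
        apply mul_le_mul (sum1d' _ hs0 hs1 _ (by nlinarith)) (sum1d' _ hs0 hs1 _ hX)
        · exact Finset.sum_nonneg fun j _ => by positivity
        · positivity
    _ = _ := by
        have : X ^ (3+ζ) = (X^2) ^ (1 - -ζ/3) * X ^ (1 - -ζ/3) := by
          rw [← Real.rpow_two, ← Real.rpow_mul hX0.le, ← Real.rpow_add hX0]; congr 1; ring
        rw [this]; ring

lemma nu_one_left : nu 1 0 ≤ 1 := by simp [nu]
lemma nu_one_right : nu 0 1 ≤ 1 := by simp [nu]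

def ZeroOut (r : ℝ) (f : ℤ → ℤ → ℝ) : Prop := ∀ i j : ℤ, r < nu i j → f i j = 0

lemma nu_neg (i j : ℤ) : nu (-i) (-j) = nu i j := by simp [nu]

lemma nu_shiftT (i j : ℤ) : nu i j ≤ nu (i+1) j + 1 := by
  have := nu_add (i+1) j (-1) (-0)
  rw [nu_neg 1 0] at this
  simp only [neg_zero, add_zero, add_neg_cancel_right] at this
  linarith [nu_one_left]

lemma nu_shiftX (i j : ℤ) : nu i j ≤ nu i (j+1) + 1 := by
  have := nu_add i (j+1) (-0) (-1)
  rw [nu_neg 0 1] at this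
  simp only [neg_zero, add_zero, add_neg_cancel_right] at this
  linarith [nu_one_right]

lemma ZeroOut.fdT {r : ℝ} {f : ℤ → ℤ → ℝ} (h : ZeroOut r f) (ε : ℝ) : ZeroOut (r+1) (fdT ε f) := by
  intro i j hij
  have h1 := h i j (by linarith)
  have h2 := h (i+1) j (by linarith [nu_shiftT i j])
  simp [_root_.fdT, h1, h2]

lemma ZeroOut.fdX {r : ℝ} {f : ℤ → ℤ → ℝ} (h : ZeroOut r f) (ε : ℝ) : ZeroOut (r+1) (fdX ε f) := by
  intro i j hij
  have h1 := h i j (by linarith)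
  have h2 := h i (j+1) (by linarith [nu_shiftX i j])
  simp [_root_.fdX, h1, h2]

lemma ZeroOut.fdiff {r : ℝ} {f : ℤ → ℤ → ℝ} (h : ZeroOut r f) (ε : ℝ) (k₀ k₁ : ℕ) :
    ZeroOut (r + k₁ + k₀) (fdiff ε k₀ k₁ f) := by
  unfold _root_.fdiff
  have hx : ZeroOut (r + k₁) ((_root_.fdX ε)^[k₁] f) := by
    induction k₁ with
    | zero => simpa using h
    | succ n ih =>
      rw [Function.iterate_succ_apply']
      have := ih.fdX ε
      push_cast
      rwa [add_assoc] at this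
  induction k₀ with
  | zero => simpa using hx
  | succ n ih =>
    rw [Function.iterate_succ_apply']
    have := ih.fdT ε
    push_cast
    rwa [add_assoc (r + k₁)] at this

lemma fdT_fdX (ε : ℝ) : Function.Commute (fdT ε) (fdX ε) := by
  intro f; funext i j; simp only [fdT, fdX]; ring

lemma fdT_fdiff (ε : ℝ) (k₀ k₁ : ℕ) (f : ℤ → ℤ → ℝ) :
    fdT ε (fdiff ε k₀ k₁ f) = fdiff ε (k₀+1) k₁ f := by
  unfold fdiff; rw [Function.iterate_succ_apply']

lemma fdX_fdiff (ε : ℝ) (k₀ k₁ : ℕ) (f : ℤ → ℤ → ℝ) :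
    fdX ε (fdiff ε k₀ k₁ f) = fdiff ε k₀ (k₁+1) f := by
  unfold fdiff; rw [Function.iterate_succ_apply']
  exact (((fdT_fdX ε).iterate_left k₀).symm) _

lemma fdiff_sub (ε : ℝ) (k₀ k₁ : ℕ) (f g : ℤ → ℤ → ℝ) :
    fdiff ε k₀ k₁ (fun i j => f i j - g i j) = fun i j => fdiff ε k₀ k₁ f i j - fdiff ε k₀ k₁ g i j := by
  unfold fdiff
  have hx : (fdX ε)^[k₁] (fun i j => f i j - g i j)
      = fun i j => (fdX ε)^[k₁] f i j - (fdX ε)^[k₁] g i j := by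
    induction k₁ with
    | zero => rfl
    | succ n ih => 
      simp only [Function.iterate_succ_apply', ih]
      funext i j; simp only [fdX]; ring
  rw [hx]
  induction k₀ with
  | zero => rfl
  | succ n ih => 
    simp only [Function.iterate_succ_apply', ih]
    funext i j; simp only [fdT]; ring

lemma tsum_box {r : ℝ} {ψ : ℤ → ℤ → ℝ} (h : ZeroOut r ψ) (g : ℤ × ℤ → ℝ) :
    ∑' p : ℤ × ℤ, g p * ψ p.1 p.2 = ∑ p ∈ box r, g p * ψ p.1 p.2 := by
  apply tsum_eq_sum
  intro p hp
  have : r < nu p.1 p.2 := by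
    by_contra hc
    exact hp (mem_box r p.1 p.2 (not_lt.1 hc))
  rw [h _ _ this, mul_zero]

lemma dconv_box {r : ℝ} {ψ : ℤ → ℤ → ℝ} (h : ZeroOut r ψ) (ε : ℝ) (K : ℤ → ℤ → ℝ) (i j : ℤ) :
    dconv ε K ψ i j = ε^3 * ∑ p ∈ box r, K (i - p.1) (j - p.2) * ψ p.1 p.2 := by
  unfold dconv; rw [tsum_box h (fun p => K (i - p.1) (j - p.2))]

lemma fdT_dconv {r : ℝ} {ψ : ℤ → ℤ → ℝ} (h : ZeroOut r ψ) (ε : ℝ) (K : ℤ → ℤ → ℝ) :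
    fdT ε (dconv ε K ψ) = dconv ε (fdT ε K) ψ := by
  funext i j
  rw [fdT, dconv_box h, dconv_box h, dconv_box h, ← mul_sub, ← Finset.sum_sub_distrib, mul_div_assoc,
    Finset.sum_div]
  congr 1
  refine Finset.sum_congr rfl fun p _ => ?_
  rw [fdT, show i + 1 - p.1 = i - p.1 + 1 by ring]; ring

lemma fdX_dconv {r : ℝ} {ψ : ℤ → ℤ → ℝ} (h : ZeroOut r ψ) (ε : ℝ) (K : ℤ → ℤ → ℝ) :
    fdX ε (dconv ε K ψ) = dconv ε (fdX ε K) ψ := by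
  funext i j
  rw [fdX, dconv_box h, dconv_box h, dconv_box h, ← mul_sub, ← Finset.sum_sub_distrib, mul_div_assoc,
    Finset.sum_div]
  congr 1
  refine Finset.sum_congr rfl fun p _ => ?_
  rw [fdX, show j + 1 - p.2 = j - p.2 + 1 by ring]; ring

lemma fdiff_dconv {r : ℝ} {ψ : ℤ → ℤ → ℝ} (h : ZeroOut r ψ) (ε : ℝ) (K : ℤ → ℤ → ℝ) (k₀ k₁ : ℕ) :
    fdiff ε k₀ k₁ (dconv ε K ψ) = dconv ε (fdiff ε k₀ k₁ K) ψ := by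
  unfold fdiff
  have hx : (fdX ε)^[k₁] (dconv ε K ψ) = dconv ε ((fdX ε)^[k₁] K) ψ := by
    induction k₁ with
    | zero => rfl
    | succ n ih => simp only [Function.iterate_succ_apply', ih, fdX_dconv h]
  rw [hx]
  induction k₀ with
  | zero => rfl
  | succ n ih => simp only [Function.iterate_succ_apply', ih, fdT_dconv h]

lemma dconv_comm (ε : ℝ) (K ψ : ℤ → ℤ → ℝ) : dconv ε K ψ = dconv ε ψ K := by
  funext i j
  unfold dconv
  congr 1
  rw [← (Equiv.subLeft ((i, j) : ℤ × ℤ)).tsum_eq]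
  refine tsum_congr fun p => ?_
  simp [mul_comm]

lemma walk_nat (f : ℤ → ℝ) (B : ℝ) (a : ℤ) (n : ℕ)
    (h : ∀ c, a ≤ c → c < a + n → |f (c+1) - f c| ≤ B) : |f (a+n) - f a| ≤ n * B := by
  induction n with
  | zero => simp
  | succ n ih =>
    have h1 := ih fun c h1 h2 => h c h1 (by push_cast; omega)
    have h2 := h (a+n) (by omega) (by push_cast; omega)
    push_cast
    rw [← add_assoc]
    calc _ = |(f (a+n+1) - f (a+n)) + (f (a+n) - f a)| := by ring_nf
      _ ≤ _ := abs_add_le _ _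
      _ ≤ _ := by linarith

lemma walk (f : ℤ → ℝ) (B : ℝ) (a b : ℤ)
    (h : ∀ c, |c| ≤ |b| → |f (a - c + 1) - f (a - c)| ≤ B) : |f a - f (a - b)| ≤ |(b:ℝ)| * B := by
  rcases le_total 0 b with hb | hb
  · obtain ⟨n, rfl⟩ := Int.eq_ofNat_of_zero_le hb
    have := walk_nat f B (a - n) n fun c h1 h2 => by
      have := h (a - c) (by rw [abs_le, Int.abs_eq_natAbs, Int.natAbs_natCast]; omega)
      simpa using this
    simpa using this
  · obtain ⟨n, hn⟩ := Int.eq_ofNat_of_zero_le (neg_nonneg.2 hb)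
    obtain rfl : b = -n := by omega
    have := walk_nat f B a n fun c h1 h2 => by
      have := h (a - c) (by rw [abs_le, abs_neg, Int.abs_eq_natAbs, Int.natAbs_natCast]; omega)
      simpa using this
    rw [abs_sub_comm]
    simpa using this

/-- one-step move bound -/
lemma far_move (ε : ℝ) (hε : 0 < ε) (β κ M u : ℝ) (hβ : β ≤ 0) (hκ1 : κ ≤ 1) (hM : 0 ≤ M)
    (hu : 0 < u)
    (G : ℤ → ℤ → ℝ)
    (hT : ∀ i j, |fdT ε G i j| ≤ M * snormE ε i j ^ (β - 2))
    (hX : ∀ i j, |fdX ε G i j| ≤ M * snormE ε i j ^ (β - 1))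
    (i j a b : ℤ) (hw : snorm ε a b ≤ u) (hz : 2 * u ≤ snormE ε i j) :
    |G i j - G (i - a) (j - b)| ≤ 2 * M * (snormE ε i j / 2) ^ (β - κ) * u ^ κ := by
  set s := snormE ε i j with hs
  have hs2 : 0 < s / 2 := by linarith
  -- lower bound on intermediate points
  have low : ∀ c d : ℤ, |c| ≤ |a| → |d| ≤ |b| → s / 2 ≤ snormE ε (i - c) (j - d) := by
    intro c d hc hd
    have h1 := nu_add (i - c) (j - d) c d
    rw [sub_add_cancel, sub_add_cancel] at h1
    have h2 := nu_mono hc hd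
    rw [snorm_eq ε hε] at hw
    have h3 : s ≤ snormE ε (i - c) (j - d) + ε * nu a b := by
      rw [hs, snormE_eq ε hε, snormE_eq ε hε, ← mul_add]
      apply mul_le_mul_of_nonneg_left _ hε.le
      have h5 := le_max_left (nu (i-c) (j-d)) 1
      have h6 := le_max_right (nu (i-c) (j-d)) 1
      have h7 := nu_nonneg a b
      exact max_le (by linarith) (by linarith)
    linarith
  have ha : ε^2 * |(a:ℝ)| ≤ u^2 := by
    have : Real.sqrt |ε^2 * (a:ℝ)| ≤ u := (le_max_left _ _).trans hw
    rw [Real.sqrt_le_left hu.le, abs_mul, abs_of_pos (by positivity : 0 < ε^2)] at this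
    exact this
  have hb : ε * |(b:ℝ)| ≤ u := by
    have : |ε * (b:ℝ)| ≤ u := (le_max_right _ _).trans hw
    rwa [abs_mul, abs_of_pos hε] at this
  have h1 : |G i j - G i (j - b)| ≤ |(b:ℝ)| * (ε * (M * (s/2)^(β-1))) := by
    apply walk (fun x => G i x)
    intro c hc
    have h2 := hX i (j - c)
    have h3 := low 0 c (by simp) hc
    rw [sub_zero] at h3
    have h4 : snormE ε i (j - c) ^ (β-1) ≤ (s/2)^(β-1) :=
      Real.rpow_le_rpow_of_nonpos hs2 h3 (by linarith)
    rw [fdX, abs_div, abs_of_pos hε, div_le_iff₀ hε] at h2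
    refine h2.trans ?_
    rw [mul_comm]
    gcongr
  have h2 : |G i (j - b) - G (i - a) (j - b)| ≤ |(a:ℝ)| * (ε^2 * (M * (s/2)^(β-2))) := by
    apply walk (fun x => G x (j - b))
    intro c hc
    have h2 := hT (i - c) (j - b)
    have h3 := low c b hc le_rfl
    have h4 : snormE ε (i - c) (j - b) ^ (β-2) ≤ (s/2)^(β-2) :=
      Real.rpow_le_rpow_of_nonpos hs2 h3 (by linarith)
    rw [fdT, abs_div, abs_of_pos (by positivity : 0 < ε^2), div_le_iff₀ (by positivity)] at h2
    refine h2.trans ?_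
    rw [mul_comm]
    gcongr
  -- power comparison
  have hpow : ∀ e : ℝ, 1 ≤ e → u ^ e * (s/2)^(β - e) ≤ (s/2)^(β-κ) * u^κ := by
    intro e he
    have : u ^ e = u ^ κ * u ^ (e - κ) := by rw [← Real.rpow_add hu]; congr 1; ring
    have h' : (s/2)^(β-κ) = (s/2)^(β-e) * (s/2)^(e-κ) := by rw [← Real.rpow_add hs2]; congr 1; ring
    have h'' : u ^ (e-κ) ≤ (s/2)^(e-κ) := Real.rpow_le_rpow hu.le (by linarith) (by linarith)
    rw [this, h']
    calc _ = ((s/2)^(β-e) * u^κ) * u^(e-κ) := by ring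
      _ ≤ ((s/2)^(β-e) * u^κ) * (s/2)^(e-κ) := by gcongr
      _ = _ := by ring
  have p1 := hpow 1 le_rfl
  have p2 := hpow 2 (by norm_num)
  rw [Real.rpow_one] at p1
  rw [Real.rpow_two] at p2
  calc _ = |(G i j - G i (j - b)) + (G i (j - b) - G (i - a) (j - b))| := by ring_nf
    _ ≤ _ := abs_add_le _ _
    _ ≤ |(b:ℝ)| * (ε * (M * (s/2)^(β-1))) + |(a:ℝ)| * (ε^2 * (M * (s/2)^(β-2))) := add_le_add h1 h2
    _ = M * ((ε * |(b:ℝ)|) * (s/2)^(β-1) + (ε^2 * |(a:ℝ)|) * (s/2)^(β-2)) := by ring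
    _ ≤ M * (u * (s/2)^(β-1) + u^2 * (s/2)^(β-2)) := by gcongr
    _ ≤ M * ((s/2)^(β-κ) * u^κ + (s/2)^(β-κ) * u^κ) := by gcongr
    _ = _ := by ring

lemma avg_bound {r : ℝ} {ψ : ℤ → ℤ → ℝ} (h : ZeroOut r ψ) (h0 : ∀ i j, 0 ≤ ψ i j) (ε : ℝ) (hε : 0 < ε)
    (h1 : ε ^ 3 * ∑' p : ℤ × ℤ, ψ p.1 p.2 = 1) (G : ℤ → ℤ → ℝ) (i j : ℤ) (B : ℝ)
    (hB : ∀ a b, nu a b ≤ r → |G i j - G (i - a) (j - b)| ≤ B) :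
    |G i j - dconv ε G ψ i j| ≤ B := by
  have e0 := tsum_box h (fun _ => 1)
  simp only [one_mul] at e0
  rw [e0] at h1
  have e : G i j - dconv ε G ψ i j
      = ε^3 * ∑ p ∈ box r, (G i j - G (i - p.1) (j - p.2)) * ψ p.1 p.2 := by
    rw [dconv_box h]
    simp only [sub_mul, Finset.sum_sub_distrib, ← Finset.mul_sum, mul_sub]
    linear_combination (-G i j) * h1
  rw [e, abs_mul, abs_of_pos (by positivity : 0 < ε^3)]
  calc _ ≤ ε^3 * ∑ p ∈ box r, B * ψ p.1 p.2 := by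
        gcongr
        refine (Finset.abs_sum_le_sum_abs _ _).trans (Finset.sum_le_sum fun p _ => ?_)
        rw [abs_mul, abs_of_nonneg (h0 _ _)]
        by_cases hp : nu p.1 p.2 ≤ r
        · exact mul_le_mul_of_nonneg_right (hB _ _ hp) (h0 _ _)
        · rw [h _ _ (not_le.1 hp)]; simp
    _ = B * (ε^3 * ∑ p ∈ box r, ψ p.1 p.2) := by rw [← Finset.mul_sum]; ring
    _ = B := by rw [h1, mul_one]

/-- near bound: convolution with a bounded compactly supported function -/
lemma near_bound (ε : ℝ) (hε : 0 < ε) (ζ : ℝ) (h3 : -3 < ζ) (hζ0 : ζ ≤ 0) (M D r X : ℝ) (hM : 0 ≤ M)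
    (hD : 0 ≤ D) (hX : 1 ≤ X) (K φ : ℤ → ℤ → ℝ)
    (hK : ∀ i j, |K i j| ≤ M * snormE ε i j ^ ζ) (hφ : ∀ i j, |φ i j| ≤ D) (hφ0 : ZeroOut r φ)
    (i j : ℤ) (hz : nu i j + r ≤ X) :
    |dconv ε φ K i j| ≤ D * M * (1 + 2 / (1 - -ζ/3))^2 * (ε * X) ^ (3 + ζ) := by
  have hX0 : 0 < X := by linarith
  have e : ∑' p : ℤ × ℤ, φ (i - p.1) (j - p.2) * K p.1 p.2
      = ∑ p ∈ box X, φ (i - p.1) (j - p.2) * K p.1 p.2 := by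
    apply tsum_eq_sum
    intro p hp
    have h1 : X < nu p.1 p.2 := by
      by_contra hc
      exact hp (mem_box X p.1 p.2 (not_lt.1 hc))
    have h2 := nu_add i j (-(i - p.1)) (-(j - p.2))
    rw [nu_neg] at h2
    have h4 : r < nu (i - p.1) (j - p.2) := by
      simp only [neg_sub, add_sub_cancel] at h2
      linarith
    rw [hφ0 _ _ h4, zero_mul]
  unfold dconv
  rw [e, abs_mul, abs_of_pos (by positivity : 0 < ε^3)]
  calc _ ≤ ε^3 * ∑ p ∈ box X, (D * M * ε^ζ) * (max (nu p.1 p.2) 1) ^ ζ := by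
        gcongr
        refine (Finset.abs_sum_le_sum_abs _ _).trans (Finset.sum_le_sum fun p _ => ?_)
        rw [abs_mul]
        have h5 := hK p.1 p.2
        rw [snormE_eq ε hε, Real.mul_rpow hε.le (by positivity)] at h5
        calc _ ≤ D * (M * (ε^ζ * (max (nu p.1 p.2) 1) ^ ζ)) :=
              mul_le_mul (hφ _ _) h5 (abs_nonneg _) hD
          _ = _ := by ring
    _ = ε^3 * ((D * M * ε^ζ) * ∑ p ∈ box X, (max (nu p.1 p.2) 1) ^ ζ) := by rw [← Finset.mul_sum]
    _ ≤ ε^3 * ((D * M * ε^ζ) * ((1 + 2 / (1 - -ζ/3))^2 * X ^ (3 + ζ))) := by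
        gcongr
        exact sum2d ζ h3 hζ0 X hX
    _ = _ := by
        rw [Real.mul_rpow hε.le hX0.le, Real.rpow_add hε]
        have : ε ^ (3:ℝ) = ε ^ 3 := by norm_cast
        rw [this]; ring

set_option maxHeartbeats 2000000 in
/-- mollifying a discrete singular kernel of order `ζ ∈ (-3,0]`
by a discrete mollifier at scale `ε̄ ∈ [ε,1]` costs `ε̄^κ` and `κ` orders of
singularity. -/
theorem statement16 (ζ κ : ℝ) (hζ : ζ ∈ Set.Ioc (-3 : ℝ) 0)
    (hκ : κ ∈ Set.Icc (0 : ℝ) 1) (m : ℕ) (Rbar A R : ℝ)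
    (hRbar : 0 < Rbar) (hA : 0 < A) (hR : 0 < R) :
    ∃ C : ℝ, 0 < C ∧
      ∀ (N : ℕ) (ε : ℝ), ε = ((2 : ℝ) ^ N)⁻¹ →
      ∀ εb : ℝ, εb ∈ Set.Icc ε 1 →
      ∀ ψ : ℤ → ℤ → ℝ,
        (∀ mz j : ℤ, 0 ≤ ψ mz j) →
        (∀ mz j : ℤ, Rbar * εb < snorm ε mz j → ψ mz j = 0) →
        (ε ^ 3 * ∑' p : ℤ × ℤ, ψ p.1 p.2 = 1) →
        (∀ k₀ k₁ : ℕ, 2 * k₀ + k₁ ≤ m + 2 → ∀ mz j : ℤ,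
          |fdiff ε k₀ k₁ ψ mz j| ≤ A * εb ^ (-3 - (2 * (k₀ : ℝ) + (k₁ : ℝ)))) →
      ∀ K : ℤ → ℤ → ℝ, SuppIn ε R K →
      ∀ M : ℝ, 0 ≤ M → SingBound ε ζ (m + 2) M K →
        SingBound ε (ζ - κ) m (C * εb ^ κ * M)
          (fun mz j => K mz j - dconv ε K ψ mz j) := by
  obtain ⟨hζ3, hζ0⟩ := hζ
  obtain ⟨hκ0, hκ1⟩ := hκ
  have hs1 : 0 < 1 - -ζ/3 := by linarith
  set c : ℝ := 2 * Rbar + 1 with hc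
  set Q : ℝ := 3 * Rbar + m + 2 with hQ
  set P : ℝ := κ - ζ + m with hP
  set C1 : ℝ := (1 + 2 / (1 - -ζ/3))^2 with hC1
  have hcpos : 0 < c := by positivity
  have hc1 : 1 ≤ c := by linarith
  have hm0 : (0:ℝ) ≤ m := Nat.cast_nonneg m
  have hQpos : 0 < Q := by positivity
  have hC1pos : 0 < C1 := by positivity
  set Ca : ℝ := 2 * 2^P * Rbar^κ with hCa
  set Cb : ℝ := c^κ + A * C1 * Q^(3+ζ) * c^P with hCb
  have hCapos : 0 < Ca := by positivity
  have hCbpos : 0 < Cb := by positivity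
  refine ⟨Ca + Cb, by positivity, ?_⟩
  intro N ε hεN εb hεb ψ hψ0 hψs hψ1 hψD K hKs M hM hK k₀ k₁ hk i j
  have hε : 0 < ε := by rw [hεN]; positivity
  obtain ⟨hεb1, -⟩ := hεb
  have hb : 0 < εb := lt_of_lt_of_le hε hεb1
  set ρ := εb / ε with hρ
  have hρ1 : 1 ≤ ρ := by rw [hρ, one_le_div hε]; exact hεb1
  have hερ : ε * ρ = εb := by rw [hρ]; field_simp
  have hψZ : ZeroOut (Rbar * ρ) ψ := by
    intro a b hab
    apply hψs
    rw [snorm_eq ε hε, ← hερ]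
    nlinarith
  have hKZ : ZeroOut (R / ε) K := by
    intro a b hab
    apply hKs
    rw [snorm_eq ε hε]
    rwa [div_lt_iff₀' hε] at hab
  set L : ℝ := 2 * (k₀:ℝ) + k₁ with hL
  have hL0 : 0 ≤ L := by positivity
  have hLm : L ≤ m := by rw [hL]; exact_mod_cast hk
  set s := snormE ε i j with hs
  have hspos : 0 < s := lt_of_lt_of_le hε (le_max_right _ _)
  set β := ζ - L with hβ
  have hexp : ζ - κ - L = β - κ := by rw [hβ]; ring
  rw [hexp, fdiff_sub]
  have hsκ : 0 < s^(β-κ) := by positivity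
  have hbκ : 0 < εb^κ := by positivity
  have suff : |fdiff ε k₀ k₁ K i j - fdiff ε k₀ k₁ (dconv ε K ψ) i j| ≤ Ca * (εb^κ * M * s^(β-κ)) ∨
      |fdiff ε k₀ k₁ K i j - fdiff ε k₀ k₁ (dconv ε K ψ) i j| ≤ Cb * (εb^κ * M * s^(β-κ)) := by
    rcases le_total (c * εb) s with hfar | hnear
    · left
      rw [fdiff_dconv hψZ]
      have hB : 2 * M * (s / 2) ^ (β - κ) * (Rbar * εb) ^ κ ≤ Ca * (εb^κ * M * s^(β-κ)) := by
        rw [Real.div_rpow hspos.le (by norm_num), Real.mul_rpow hRbar.le hb.le, div_eq_mul_inv,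
          ← Real.rpow_neg (by norm_num)]
        have : (2:ℝ)^(-(β-κ)) ≤ 2^P := Real.rpow_le_rpow_of_exponent_le (by norm_num) (by linarith)
        calc _ = (2 * M * s^(β-κ) * Rbar^κ * εb^κ) * 2^(-(β-κ)) := by ring
          _ ≤ (2 * M * s^(β-κ) * Rbar^κ * εb^κ) * 2^P := by gcongr
          _ = _ := by rw [hCa]; ring
      refine le_trans ?_ hB
      refine avg_bound hψZ hψ0 ε hε hψ1 _ i j _ fun a b hab => ?_
      refine far_move ε hε β κ M (Rbar * εb) (by linarith) hκ1 hM (by positivity) _ ?_ ?_ i j a b ?_ ?_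
      · intro x y
        rw [fdT_fdiff]
        convert hK (k₀+1) k₁ (by omega) x y using 3
        push_cast; rw [hβ, hL]; ring
      · intro x y
        rw [fdX_fdiff]
        convert hK k₀ (k₁+1) (by omega) x y using 3
        push_cast; rw [hβ, hL]; ring
      · rw [snorm_eq ε hε, ← hερ]; nlinarith
      · rw [← hs]; nlinarith
    · right
      have hsplit : s^β = s^(β-κ) * s^κ := by rw [← Real.rpow_add hspos]; congr 1; ring
      have t1 : |fdiff ε k₀ k₁ K i j| ≤ c^κ * (εb^κ * M * s^(β-κ)) := by
        have h1 := hK k₀ k₁ (by omega) i j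
        rw [← hL, ← hβ, ← hs, hsplit] at h1
        have h2 : s^κ ≤ c^κ * εb^κ := by
          rw [← Real.mul_rpow hcpos.le hb.le]; exact Real.rpow_le_rpow hspos.le hnear hκ0
        calc _ ≤ _ := h1
          _ ≤ M * (s^(β-κ) * (c^κ * εb^κ)) := by gcongr
          _ = _ := by ring
      have t2 : |fdiff ε k₀ k₁ (dconv ε K ψ) i j| ≤ A * C1 * Q^(3+ζ) * c^P * (εb^κ * M * s^(β-κ)) := by
        rw [dconv_comm, fdiff_dconv hKZ]
        have hnu : nu i j ≤ c * ρ := by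
          have : ε * nu i j ≤ ε * (c * ρ) := by
            calc ε * nu i j ≤ s := by
                  rw [hs, snormE_eq ε hε]; exact mul_le_mul_of_nonneg_left (le_max_left _ _) hε.le
              _ ≤ c * εb := hnear
              _ = _ := by rw [← hερ]; ring
          exact le_of_mul_le_mul_left this hε
        have hkk : (k₁:ℝ) + k₀ ≤ m := by
          have : (0:ℝ) ≤ k₀ := Nat.cast_nonneg _
          linarith
        have h1 := near_bound ε hε ζ hζ3 hζ0 M (A * εb ^ (-3 - L)) (Rbar * ρ + k₁ + k₀) (Q * ρ) hM
          (by positivity) (by nlinarith) K (fdiff ε k₀ k₁ ψ)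
          (fun x y => by simpa [fdiff] using hK 0 0 (by omega) x y)
          (fun x y => hψD k₀ k₁ (by omega) x y) (hψZ.fdiff ε k₀ k₁) i j
          (by rw [hQ]; rw [hc] at hnu; nlinarith)
        have e1 : ε * (Q * ρ) = Q * εb := by rw [← hερ]; ring
        rw [e1, Real.mul_rpow hQpos.le hb.le, ← hC1] at h1
        have e2 : εb ^ (-3 - L) * εb^(3+ζ) = εb^κ * εb^(β-κ) := by
          rw [← Real.rpow_add hb, ← Real.rpow_add hb]; congr 1; rw [hβ]; ring
        have e3 : εb^(β-κ) ≤ c^P * s^(β-κ) := by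
          have h2 : (c * εb)^(β-κ) ≤ s^(β-κ) := Real.rpow_le_rpow_of_nonpos hspos hnear (by linarith)
          rw [Real.mul_rpow hcpos.le hb.le] at h2
          have h3 : c^(-(β-κ)) ≤ c^P := Real.rpow_le_rpow_of_exponent_le hc1 (by linarith)
          calc εb^(β-κ) = c^(-(β-κ)) * (c^(β-κ) * εb^(β-κ)) := by
                rw [← mul_assoc, ← Real.rpow_add hcpos]; simp
            _ ≤ c^P * s^(β-κ) := by gcongr
        calc _ ≤ _ := h1
          _ = A * M * C1 * Q^(3+ζ) * (εb ^ (-3 - L) * εb^(3+ζ)) := by ring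
          _ = A * M * C1 * Q^(3+ζ) * εb^κ * εb^(β-κ) := by rw [e2]; ring
          _ ≤ A * M * C1 * Q^(3+ζ) * εb^κ * (c^P * s^(β-κ)) := by gcongr
          _ = _ := by ring
      calc _ ≤ _ := abs_sub _ _
        _ ≤ _ := add_le_add t1 t2
        _ = _ := by rw [hCb]; ring
  have hY : 0 ≤ εb^κ * M * s^(β-κ) := by positivity
  have e9 : (Ca + Cb) * εb^κ * M * s^(β-κ) = Ca * (εb^κ * M * s^(β-κ)) + Cb * (εb^κ * M * s^(β-κ)) := by
    ring
  rw [e9]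
  have := mul_nonneg hCapos.le hY
  have := mul_nonneg hCbpos.le hY
  rcases suff with h | h
  · exact h.trans (by linarith)
  · exact h.trans (by linarith)
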